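/- For every n ∈ ℕ and every edge e of S_{(n+1)×n}, Maker has a winning strategy for the (1,1)-crossing game on S_{(n+1)×n} (the game of Bridg-it) whose first move is the edge e. In other words, Maker can choose any edge she wants on her first move and still win. -/

import Mathlib

namespace CrossingGames

/-- A vertex of the square integer lattice `ℤ²`. -/
abbrev Vtx : Type := ℤ × ℤ

/-- An edge of the square integer lattice `ℤ²`, encoded as a base vertex together with a
direction: `(v, true)` is the horizontal edge joining `v = (x,y)` to `(x+1,y)`, while
`(v, false)` is the vertical edge joining `v = (x,y)` to `(x,y+1)`. -/
abbrev Edge : Type := Vtx × Bool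

/-- The two endpoints of an edge. -/
def ends (e : Edge) : Vtx × Vtx :=
  (e.1, if e.2 then (e.1.1 + 1, e.1.2) else (e.1.1, e.1.2 + 1))

/-- The edge `e` joins the vertices `u` and `v`. -/
def joins (e : Edge) (u v : Vtx) : Prop :=
  ((ends e).1 = u ∧ (ends e).2 = v) ∨ ((ends e).1 = v ∧ (ends e).2 = u)

/-- The vertex set of the grid `Λ_{m×n}`: all `(x,y) ∈ ℤ²` with `1 ≤ x ≤ m`, `1 ≤ y ≤ n`. -/
def lamVtx (m n : ℕ) : Set Vtx :=
  {v | 1 ≤ v.1 ∧ v.1 ≤ (m : ℤ) ∧ 1 ≤ v.2 ∧ v.2 ≤ (n : ℤ)}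

/-- The edge set of the grid `Λ_{m×n}`: lattice edges with both endpoints in `Λ_{m×n}`. -/
def lamEdges (m n : ℕ) : Set Edge :=
  {e | (ends e).1 ∈ lamVtx m n ∧ (ends e).2 ∈ lamVtx m n}

/-- The edge set of the board `S_{m×n}`: the grid `Λ_{m×n}` with all of its leftmost and
rightmost vertical edges deleted. -/
def sEdges (m n : ℕ) : Set Edge :=
  {e ∈ lamEdges m n | ¬ (e.2 = false ∧ (e.1.1 = 1 ∨ e.1.1 = (m : ℤ)))}

/-- The list of consecutive pairs of a list. -/
def cp {α : Type*} (l : List α) : List (α × α) := l.zip l.tail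

/-- `S` contains all the edges of a left-right crossing path of a board with `m` columns
and `n` rows: a path of edges of `S` joining a vertex `(1,y)` on the left-hand side of the
board to a vertex `(m,y')` on its right-hand side. -/
def HasCrossing (m n : ℕ) (S : Set Edge) : Prop :=
  ∃ l : List Vtx,
    (∃ v, l.head? = some v ∧ v.1 = 1) ∧
    (∃ v, l.getLast? = some v ∧ v.1 = (m : ℤ)) ∧
    (∀ v ∈ l, v ∈ lamVtx m n) ∧
    ∀ p ∈ cp l, ∃ e ∈ S, joins e p.1 p.2

/-- A strategy: given the list of all moves played so far (oldest first), produce the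
next move (a finite set of edges to claim). -/
abbrev Strategy : Type := List (Finset Edge) → Finset Edge

/-- The union of the moves sitting in positions of the given parity of a history
(`true`: positions 0, 2, 4, …; `false`: positions 1, 3, 5, …). -/
def altUnion : Bool → List (Finset Edge) → Finset Edge
  | _, [] => ∅
  | true, mv :: h => mv ∪ altUnion false h
  | false, _ :: h => altUnion true h

/-- All edges claimed by the player moving first (i.e. on even positions) in a history. -/
def firstClaimed (h : List (Finset Edge)) : Finset Edge := altUnion true h

/-- All edges claimed by the player moving second (i.e. on odd positions) in a history. -/
def secondClaimed (h : List (Finset Edge)) : Finset Edge := altUnion false h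

/-- All edges claimed so far in a history. -/
def allClaimed (h : List (Finset Edge)) : Finset Edge := h.foldr (· ∪ ·) ∅

/-- The history of moves (oldest first) after `t` full rounds, when the player moving
first uses strategy `σ` and the player moving second uses strategy `τ`. -/
def hist (σ τ : Strategy) : ℕ → List (Finset Edge)
  | 0 => []
  | t + 1 =>
    let h := hist σ τ t
    h ++ [σ h, τ (h ++ [σ h])]

/-- The move `mv` is legal on `board` after the history `h` for a player of bias `k`: it
consists of as-yet-unclaimed edges of the board, and there are exactly `k` of them, unless
fewer than `k` unclaimed edges remain, in which case the player claims all of them. -/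
def LegalMove (board : Set Edge) (h : List (Finset Edge)) (k : ℕ) (mv : Finset Edge) : Prop :=
  (↑mv : Set Edge) ⊆ board \ ↑(allClaimed h) ∧
    (mv.card = k ∨ (mv.card < k ∧ board \ ↑(allClaimed h) ⊆ (↑mv : Set Edge)))

/-- The player moving first (with bias `p`) always moves legally when playing `σ`
against `τ`. -/
def FirstLegal (board : Set Edge) (p : ℕ) (σ τ : Strategy) : Prop :=
  ∀ t, LegalMove board (hist σ τ t) p (σ (hist σ τ t))

/-- The player moving second (with bias `q`) always moves legally when playing `τ`
against `σ`. -/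
def SecondLegal (board : Set Edge) (q : ℕ) (σ τ : Strategy) : Prop :=
  ∀ t, LegalMove board (hist σ τ t ++ [σ (hist σ τ t)]) q (τ (hist σ τ t ++ [σ (hist σ τ t)]))

/-- Maker (playing first and claiming `p` edges per turn) has a winning strategy for the
Maker–Breaker game on `board` in which Breaker claims `q` edges per turn: she can
guarantee that at some point her claimed edges satisfy the winning condition `win`. -/
def MakerWins (board : Set Edge) (win : Set Edge → Prop) (p q : ℕ) : Prop :=
  ∃ σ : Strategy, ∀ τ : Strategy, SecondLegal board q σ τ →
    FirstLegal board p σ τ ∧ ∃ t, win ↑(firstClaimed (hist σ τ t))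

/-- Breaker (playing second and claiming `q` edges per turn) has a winning strategy for
the Maker–Breaker game on `board` in which Maker claims `p` edges per turn: he can
forever prevent Maker's claimed edges from satisfying the winning condition `win`. -/
def BreakerWins (board : Set Edge) (win : Set Edge → Prop) (p q : ℕ) : Prop :=
  ∃ τ : Strategy, ∀ σ : Strategy, FirstLegal board p σ τ →
    SecondLegal board q σ τ ∧ ∀ t, ¬ win ↑(firstClaimed (hist σ τ t))



lemma rowc (g : ℤ → Bool) (p q : ℤ) (h : ∀ x, p ≤ x → x < q → g x = g (x+1)) :
    ∀ x, p ≤ x → x ≤ q → g x = g p := by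
  intro x hx
  induction x, hx using Int.leInduction with
  | base => intro _; rfl
  | succ k hk ih => intro hq; rw [← h k hk (by omega)]; exact ih (by omega)

lemma rowd (g : ℤ → Bool) (p q : ℤ) (h : ∀ x, p ≤ x → x < q → g x = g (x+1)) :
    ∀ x x', p ≤ x → x ≤ q → p ≤ x' → x' ≤ q → g x = g x' := by
  intro x x' h1 h2 h3 h4
  rw [rowc g p q h x h1 h2, rowc g p q h x' h3 h4]

def cH (a b i : ℤ) : ℤ :=
  if a ≤ b then
    (if b < i then i - 1 else if i = b - 1 then a else if i < a then i else i + 1)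
  else
    (if i < b then i + 1 else if i = b + 1 then a else if a < i then i else i - 1)

def cV (a b i : ℤ) : ℤ :=
  if i < b then (if i + 1 < a then i else i + 1) else (if a < i then i else i - 1)

/-- horizontal first move -/
def PH (a b : ℤ) (e : Edge) : Prop :=
  if e.2 then e.1.2 ≠ b ∧ e.1.1 ≠ cH a b e.1.2
  else (e.1.1 ≤ b ∧ e.1.2 = b - 1) ∨ (b < e.1.1 ∧ e.1.2 = b)

/-- vertical first move -/
def PV (a b : ℤ) (e : Edge) : Prop :=
  if e.2 then (e.1.2 = b ∧ e.1.1 < a) ∨ (e.1.2 = b + 1 ∧ a ≤ e.1.1) ∨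
      (e.1.2 ≠ b ∧ e.1.2 ≠ b + 1 ∧ e.1.1 ≠ cV a b e.1.2)
  else (e.1.1 < a ∧ e.1.1 ≤ b ∧ e.1.2 = b) ∨ (a < e.1.1 ∧ e.1.1 ≤ b + 1 ∧ e.1.2 = b - 1) ∨
    (a < e.1.1 ∧ b + 1 < e.1.1 ∧ e.1.2 = b) ∨ (e.1.1 < a ∧ b < e.1.1 ∧ e.1.2 = b + 1)

/-- coordinate form of connectivity -/
def CC (n : ℤ) (H V : ℤ → ℤ → Prop) : Prop :=
  ∀ g : ℤ → ℤ → Bool,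
    (∀ x y, 1 ≤ x → x ≤ n → 1 ≤ y → y ≤ n → H x y → g x y = g (x+1) y) →
    (∀ x y, 2 ≤ x → x ≤ n → 1 ≤ y → y < n → V x y → g x y = g x (y+1)) →
    (∀ y, 1 ≤ y → y ≤ n → g 1 y = g 1 1) →
    (∀ y, 1 ≤ y → y ≤ n → g (n+1) y = g (n+1) 1) →
    ∀ x y, 1 ≤ x → x ≤ n+1 → 1 ≤ y → y ≤ n → g x y = g 1 1

lemma HA (n a b : ℤ) (ha : 1 ≤ a) (han : a ≤ n) (hb : 1 ≤ b) (hbn : b ≤ n) :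
    CC n (fun x y => (y ≠ b ∧ x ≠ cH a b y) ∨ (x = a ∧ y = b))
      (fun x y => (x ≤ b ∧ y = b - 1) ∨ (b < x ∧ y = b)) := by
  intro g hH hV hL hR
  have left : ∀ y, 1 ≤ y → y ≤ n → y ≠ b → ∀ x, 1 ≤ x → x ≤ n+1 → x ≤ cH a b y → g x y = g 1 1 := by
    intro y h1 h2 h3 x h4 h5 h6
    rw [← hL y h1 h2]
    refine rowc (fun x => g x y) 1 x ?_ x h4 le_rfl
    intro z hz hzx
    exact hH z y hz (by omega) h1 h2 (Or.inl ⟨h3, by omega⟩)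
  have right : ∀ y, 1 ≤ y → y ≤ n → y ≠ b → ∀ x, 1 ≤ x → x ≤ n+1 → cH a b y < x → g x y = g (n+1) 1 := by
    intro y h1 h2 h3 x h4 h5 h6
    rw [← hR y h1 h2]
    symm
    refine rowc (fun x => g x y) x (n+1) ?_ (n+1) h5 le_rfl
    intro z hz hzx
    exact hH z y (by omega) (by omega) h1 h2 (Or.inl ⟨h3, by omega⟩)
  have dn : ∀ x, 2 ≤ x → x ≤ n → x ≤ b → g x b = g x (b-1) := by
    intro x h1 h2 h3
    have := hV x (b-1) h1 h2 (by omega) (by omega) (Or.inl ⟨h3, rfl⟩)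
    rw [this]; congr 1; omega
  have up : ∀ x, 2 ≤ x → x ≤ n → b < x → g x b = g x (b+1) := by
    intro x h1 h2 h3
    exact hV x b h1 h2 (by omega) (by omega) (Or.inr ⟨h3, rfl⟩)
  have e1 : g a b = g 1 1 := by
    rcases eq_or_ne a 1 with h | h
    · rw [h]; exact hL b hb hbn
    by_cases hab : a ≤ b
    · rw [dn a (by omega) han hab]
      exact left (b-1) (by omega) (by omega) (by omega) a ha (by omega) (by unfold cH; split_ifs <;> omega)
    · rw [up a (by omega) han (by omega)]
      exact left (b+1) (by omega) (by omega) (by omega) a ha (by omega) (by unfold cH; split_ifs <;> omega)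
  have e2 : g (a+1) b = g (n+1) 1 := by
    rcases eq_or_ne a n with h | h
    · rw [h]; exact hR b hb hbn
    by_cases hab : a + 1 ≤ b
    · rw [dn (a+1) (by omega) (by omega) hab]
      exact right (b-1) (by omega) (by omega) (by omega) (a+1) (by omega) (by omega) (by unfold cH; split_ifs <;> omega)
    · rw [up (a+1) (by omega) (by omega) (by omega)]
      exact right (b+1) (by omega) (by omega) (by omega) (a+1) (by omega) (by omega) (by unfold cH; split_ifs <;> omega)
  have e3 : g (n+1) 1 = g 1 1 := by
    rw [← e1, ← e2]; exact (hH a b ha han hb hbn (Or.inr ⟨rfl, rfl⟩)).symm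
  have nb : ∀ x y, 1 ≤ x → x ≤ n+1 → 1 ≤ y → y ≤ n → y ≠ b → g x y = g 1 1 := by
    intro x y h1 h2 h3 h4 h5
    rcases le_or_gt x (cH a b y) with h | h
    · exact left y h3 h4 h5 x h1 h2 h
    · rw [right y h3 h4 h5 x h1 h2 h, e3]
  intro x y h1 h2 h3 h4
  by_cases h5 : y = b
  · subst h5
    rcases eq_or_ne x 1 with h | h
    · rw [h]; exact hL _ h3 h4
    rcases eq_or_ne x (n+1) with h' | h'
    · rw [h', hR _ h3 h4, e3]
    by_cases hx : x ≤ y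
    · rw [dn x (by omega) (by omega) hx]; exact nb _ _ (by omega) (by omega) (by omega) (by omega) (by omega)
    · rw [up x (by omega) (by omega) (by omega)]; exact nb _ _ (by omega) (by omega) (by omega) (by omega) (by omega)
  · exact nb x y h1 h2 h3 h4 h5

lemma HB (n a b : ℤ) (ha : 1 ≤ a) (han : a ≤ n) (hb : 1 ≤ b) (hbn : b ≤ n) :
    CC n (fun x y => ¬ (y ≠ b ∧ x ≠ cH a b y))
      (fun x y => ¬ ((x ≤ b ∧ y = b - 1) ∨ (b < x ∧ y = b))) := by
  intro g hH hV hL hR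
  have row : ∀ x, 1 ≤ x → x ≤ n+1 → g x b = g 1 1 := by
    intro x h1 h2
    rw [← hL b hb hbn]
    refine rowc (fun x => g x b) 1 (n+1) ?_ x h1 h2
    intro z hz hz'
    exact hH z b hz (by omega) hb hbn (by tauto)
  have hR' : ∀ y, 1 ≤ y → y ≤ n → g (n+1) y = g 1 1 := by
    intro y h1 h2
    rw [hR y h1 h2, ← hR b hb hbn]; exact row _ (by omega) le_rfl
  have up1 : ∀ x y, 2 ≤ x → x ≤ n → x ≤ b → b ≤ y → y ≤ n → g x y = g 1 1 := by
    intro x y h1 h2 h3 h4 h5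
    rw [← row x (by omega) (by omega)]
    refine rowc (fun y => g x y) b n ?_ y h4 h5
    intro z hz hz'
    exact hV x z h1 h2 (by omega) hz' (by omega)
  have dn1 : ∀ x y, 2 ≤ x → x ≤ n → b < x → 1 ≤ y → y ≤ b → g x y = g 1 1 := by
    intro x y h1 h2 h3 h4 h5
    rw [← row x (by omega) (by omega)]
    refine rowd (fun y => g x y) 1 b ?_ y b h4 h5 hb le_rfl
    intro z hz hz'
    exact hV x z h1 h2 (by omega) (by omega) (by omega)
  have dn2 : ∀ x y y', 1 ≤ x → x ≤ b+1 → 1 ≤ y → y < b → 1 ≤ y' → y' < b → g x y = g x y' := by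
    intro x y y' h1 h2 h3 h4 h5 h6
    rcases eq_or_ne x 1 with h | h
    · rw [h, hL, hL y'] <;> omega
    rcases eq_or_ne x (n+1) with h' | h'
    · rw [h', hR, hR y'] <;> omega
    rcases eq_or_ne x (b+1) with h'' | h''
    · rw [dn1 x y, dn1 x y'] <;> omega
    refine rowd (fun y => g x y) 1 (b-1) ?_ y y' h3 (by omega) h5 (by omega)
    intro z hz hz'
    exact hV x z (by omega) (by omega) (by omega) (by omega) (by omega)
  have up2 : ∀ x y y', b ≤ x → x ≤ n+1 → b < y → y ≤ n → b < y' → y' ≤ n → g x y = g x y' := by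
    intro x y y' h1 h2 h3 h4 h5 h6
    rcases eq_or_ne x 1 with h | h
    · rw [h, hL, hL y'] <;> omega
    rcases eq_or_ne x (n+1) with h' | h'
    · rw [h', hR, hR y'] <;> omega
    rcases eq_or_ne x b with h'' | h''
    · rw [up1 x y, up1 x y'] <;> omega
    refine rowd (fun y => g x y) (b+1) n ?_ y y' h3 (by omega) h5 (by omega)
    intro z hz hz'
    exact hV x z (by omega) (by omega) (by omega) (by omega) (by omega)
  have dlink : ∀ k i, 1 ≤ k → k ≤ b → 1 ≤ i → i < b → cH a b i = k → g k 1 = g (k+1) 1 := by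
    intro k i h1 h2 h3 h4 h5
    rw [dn2 k 1 i (by omega) (by omega) (by omega) (by omega) (by omega) (by omega),
      dn2 (k+1) 1 i (by omega) (by omega) (by omega) (by omega) (by omega) (by omega)]
    exact hH k i h1 (by omega) h3 (by omega) (by rintro ⟨_, h⟩; exact h h5.symm)
  have ulink : ∀ k i, b ≤ k → k ≤ n → b < i → i ≤ n → cH a b i = k → g k n = g (k+1) n := by
    intro k i h1 h2 h3 h4 h5
    rw [up2 k n i (by omega) (by omega) (by omega) (by omega) (by omega) (by omega),
      up2 (k+1) n i (by omega) (by omega) (by omega) (by omega) (by omega) (by omega)]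
    exact hH k i (by omega) (by omega) (by omega) (by omega) (by rintro ⟨_, h⟩; exact h h5.symm)
  have b1 : b < n → g b n = g 1 1 := by
    intro h
    rcases eq_or_ne b 1 with h' | h'
    · rw [h']; exact hL n (by omega) le_rfl
    · exact up1 b n (by omega) (by omega) le_rfl hbn le_rfl
  have b2 : 1 < b → g (b+1) 1 = g 1 1 := by
    intro h
    rcases eq_or_ne b n with h' | h'
    · rw [h']; exact hR' 1 le_rfl (by omega)
    · exact dn1 (b+1) 1 (by omega) (by omega) (by omega) (by omega) (by omega)
  have D : ∀ x, 2 ≤ x → x ≤ b → g x 1 = g 1 1 := by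
    by_cases hab : a ≤ b
    · have D1 : ∀ x, 1 ≤ x → x ≤ b - 1 → g x 1 = g 1 1 := by
        refine rowc (fun x => g x 1) 1 (b-1) ?_
        intro k h1 h2
        by_cases hk : k = a
        · exact dlink k (b-1) h1 (by omega) (by omega) (by omega) (by unfold cH; split_ifs <;> omega)
        by_cases hk' : k < a
        · exact dlink k k h1 (by omega) (by omega) (by omega) (by unfold cH; split_ifs <;> omega)
        · exact dlink k (k-1) h1 (by omega) (by omega) (by omega) (by unfold cH; split_ifs <;> omega)
      intro x h1 h2
      by_cases hx : x ≤ b - 1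
      · exact D1 x (by omega) hx
      have hxb : x = b := by omega
      subst hxb
      by_cases hk : x = a
      · rw [dlink x (x-1) (by omega) (by omega) (by omega) (by omega) (by unfold cH; split_ifs <;> omega)]
        exact b2 (by omega)
      · rw [← D1 (x-1) (by omega) le_rfl]
        have : x = (x - 1) + 1 := by omega
        conv_lhs => rw [this]
        symm
        by_cases hk : x - 1 = a
        · exact dlink (x-1) (x-1) (by omega) (by omega) (by omega) (by omega) (by unfold cH; split_ifs <;> omega)
        · exact dlink (x-1) (x-1-1) (by omega) (by omega) (by omega) (by omega) (by unfold cH; split_ifs <;> omega)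
    · intro x h1 h2
      rw [← b2 (by omega)]
      refine rowd (fun x => g x 1) 2 (b+1) ?_ x (b+1) h1 (by omega) (by omega) le_rfl
      intro k h1 h2
      exact dlink k (k-1) (by omega) (by omega) (by omega) (by omega) (by unfold cH; split_ifs <;> omega)
  have U : ∀ x, b < x → x ≤ n → g x n = g 1 1 := by
    by_cases hab : a ≤ b
    · intro x h1 h2
      rw [← b1 (by omega)]
      refine rowc (fun x => g x n) b n ?_ x (by omega) (by omega)
      intro k h1 h2
      exact ulink k (k+1) (by omega) (by omega) (by omega) (by omega) (by unfold cH; split_ifs <;> omega)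
    · intro x h1 h2
      rw [← hR' n (by omega) le_rfl]
      refine rowd (fun x => g x n) (b+1) (n+1) ?_ x (n+1) (by omega) (by omega) (by omega) le_rfl
      intro k h1 h2
      by_cases hk : k = a
      · exact ulink k (b+1) (by omega) (by omega) (by omega) (by omega) (by unfold cH; split_ifs <;> omega)
      by_cases hk' : a < k
      · exact ulink k k (by omega) (by omega) (by omega) (by omega) (by unfold cH; split_ifs <;> omega)
      · exact ulink k (k+1) (by omega) (by omega) (by omega) (by omega) (by unfold cH; split_ifs <;> omega)
  intro x y h1 h2 h3 h4
  rcases eq_or_ne x 1 with h | h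
  · rw [h, hL] <;> omega
  rcases eq_or_ne x (n+1) with h' | h'
  · rw [h', hR'] <;> omega
  by_cases hx : x ≤ b
  · by_cases hy : b ≤ y
    · exact up1 x y (by omega) (by omega) hx hy h4
    · rw [dn2 x y 1, D x] <;> omega
  · by_cases hy : y ≤ b
    · exact dn1 x y (by omega) (by omega) (by omega) (by omega) hy
    · rw [up2 x y n, U x] <;> omega

lemma VA (n a b : ℤ) (ha : 2 ≤ a) (han : a ≤ n) (hb : 1 ≤ b) (hbn : b < n) :
    CC n (fun x y => (y = b ∧ x < a) ∨ (y = b + 1 ∧ a ≤ x) ∨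
      (y ≠ b ∧ y ≠ b + 1 ∧ x ≠ cV a b y))
      (fun x y => ((x < a ∧ x ≤ b ∧ y = b) ∨ (a < x ∧ x ≤ b + 1 ∧ y = b - 1) ∨
    (a < x ∧ b + 1 < x ∧ y = b) ∨ (x < a ∧ b < x ∧ y = b + 1)) ∨ (x = a ∧ y = b)) := by
  intro g hH hV hL hR
  have lo : ∀ x, 1 ≤ x → x ≤ a → g x b = g 1 1 := by
    intro x h1 h2
    rw [← hL b hb (by omega)]
    refine rowc (fun x => g x b) 1 a ?_ x h1 h2
    intro z hz hz'
    exact hH z b hz (by omega) hb (by omega) (by omega)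
  have hi : ∀ x, a ≤ x → x ≤ n+1 → g x (b+1) = g (n+1) 1 := by
    intro x h1 h2
    rw [← hR (b+1) (by omega) (by omega)]
    refine rowd (fun x => g x (b+1)) a (n+1) ?_ x (n+1) h1 h2 (by omega) le_rfl
    intro z hz hz'
    exact hH z (b+1) (by omega) (by omega) (by omega) (by omega) (by omega)
  have e3 : g (n+1) 1 = g 1 1 := by
    rw [← lo a (by omega) le_rfl, ← hi a le_rfl (by omega)]
    exact (hV a b (by omega) (by omega) (by omega) (by omega) (by omega)).symm
  have nb : ∀ x y, 1 ≤ x → x ≤ n+1 → 1 ≤ y → y ≤ n → y ≠ b → y ≠ b+1 → g x y = g 1 1 := by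
    intro x y h1 h2 h3 h4 h5 h6
    rcases le_or_gt x (cV a b y) with h | h
    · rw [← hL y h3 h4]
      refine rowc (fun x => g x y) 1 x ?_ x h1 le_rfl
      intro z hz hzx
      exact hH z y hz (by omega) h3 h4 (by omega)
    · rw [← e3, ← hR y h3 h4]
      refine rowd (fun x => g x y) x (n+1) ?_ x (n+1) le_rfl h2 h2 le_rfl
      intro z hz hzx
      exact hH z y (by omega) (by omega) h3 h4 (by omega)
  intro x y h1 h2 h3 h4
  rcases eq_or_ne x 1 with h | h
  · rw [h, hL] <;> omega
  rcases eq_or_ne x (n+1) with h' | h'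
  · rw [h', hR, e3] <;> omega
  by_cases hy : y = b
  · subst hy
    by_cases hx : x ≤ a
    · exact lo x h1 hx
    by_cases hxb : x ≤ y + 1
    · rw [← nb x (y-1) (by omega) (by omega) (by omega) (by omega) (by omega) (by omega)]
      have := hV x (y-1) (by omega) (by omega) (by omega) (by omega) (by omega)
      rw [this]; congr 1; omega
    · rw [hV x y (by omega) (by omega) (by omega) (by omega) (by omega), hi x (by omega) h2, e3]
  by_cases hy' : y = b + 1
  · subst hy'
    by_cases hx : a ≤ x
    · rw [hi x hx h2, e3]
    by_cases hxb : x ≤ b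
    · rw [← hV x b (by omega) (by omega) (by omega) (by omega) (by omega), lo x (by omega) (by omega)]
    · rw [hV x (b+1) (by omega) (by omega) (by omega) (by omega) (by omega)]
      exact nb _ _ (by omega) (by omega) (by omega) (by omega) (by omega) (by omega)
  exact nb x y h1 h2 h3 h4 hy hy'

lemma VB (n a b : ℤ) (ha : 2 ≤ a) (han : a ≤ n) (hb : 1 ≤ b) (hbn : b < n) :
    CC n (fun x y => ¬ ((y = b ∧ x < a) ∨ (y = b + 1 ∧ a ≤ x) ∨
      (y ≠ b ∧ y ≠ b + 1 ∧ x ≠ cV a b y)))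
      (fun x y => ¬ ((x < a ∧ x ≤ b ∧ y = b) ∨ (a < x ∧ x ≤ b + 1 ∧ y = b - 1) ∨
    (a < x ∧ b + 1 < x ∧ y = b) ∨ (x < a ∧ b < x ∧ y = b + 1))) := by
  intro g hH hV hL hR
  have lo : ∀ x, a ≤ x → x ≤ n + 1 → g x b = g (n+1) 1 := by
    intro x h1 h2
    rw [← hR b hb (by omega)]
    refine rowd (fun x => g x b) a (n+1) ?_ x (n+1) h1 h2 (by omega) le_rfl
    intro z hz hz'
    exact hH z b (by omega) (by omega) hb (by omega) (by omega)
  have hi : ∀ x, 1 ≤ x → x ≤ a → g x (b+1) = g 1 1 := by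
    intro x h1 h2
    rw [← hL (b+1) (by omega) (by omega)]
    refine rowc (fun x => g x (b+1)) 1 a ?_ x h1 h2
    intro z hz hz'
    exact hH z (b+1) (by omega) (by omega) (by omega) (by omega) (by omega)
  have e3 : g (n+1) 1 = g 1 1 := by
    rw [← lo a le_rfl (by omega), ← hi a (by omega) le_rfl]
    exact hV a b (by omega) (by omega) (by omega) (by omega) (by omega)
  have lo' : ∀ x, a ≤ x → x ≤ n + 1 → g x b = g 1 1 := by
    intro x h1 h2; rw [lo x h1 h2, e3]
  have hR' : ∀ y, 1 ≤ y → y ≤ n → g (n+1) y = g 1 1 := by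
    intro y h1 h2; rw [hR y h1 h2, e3]
  have low : ∀ x y y', 1 ≤ x → x ≤ n+1 → 1 ≤ y → y < b → 1 ≤ y' → y' < b → g x y = g x y' := by
    intro x y y' h1 h2 h3 h4 h5 h6
    rcases eq_or_ne x 1 with h | h
    · rw [h, hL, hL y'] <;> omega
    rcases eq_or_ne x (n+1) with h' | h'
    · rw [h', hR, hR y'] <;> omega
    refine rowd (fun y => g x y) 1 (b-1) ?_ y y' h3 (by omega) h5 (by omega)
    intro z hz hz'
    exact hV x z (by omega) (by omega) (by omega) (by omega) (by omega)
  have upp : ∀ x y y', 1 ≤ x → x ≤ n+1 → b + 1 < y → y ≤ n → b + 1 < y' → y' ≤ n →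
      g x y = g x y' := by
    intro x y y' h1 h2 h3 h4 h5 h6
    rcases eq_or_ne x 1 with h | h
    · rw [h, hL, hL y'] <;> omega
    rcases eq_or_ne x (n+1) with h' | h'
    · rw [h', hR, hR y'] <;> omega
    refine rowd (fun y => g x y) (b+2) n ?_ y y' (by omega) (by omega) (by omega) (by omega)
    intro z hz hz'
    exact hV x z (by omega) (by omega) (by omega) (by omega) (by omega)
  have cola : ∀ y, 1 ≤ y → y ≤ n → g a y = g 1 1 := by
    intro y h1 h2
    rw [← lo' a le_rfl (by omega)]
    refine rowd (fun y => g a y) 1 n ?_ y b h1 h2 hb (by omega)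
    intro z hz hz'
    exact hV a z (by omega) (by omega) (by omega) (by omega) (by omega)
  have dlink : ∀ k i, 1 ≤ k → k ≤ n → 1 ≤ i → i < b → cV a b i = k → g k 1 = g (k+1) 1 := by
    intro k i h1 h2 h3 h4 h5
    rw [low k 1 i (by omega) (by omega) (by omega) (by omega) (by omega) (by omega),
      low (k+1) 1 i (by omega) (by omega) (by omega) (by omega) (by omega) (by omega)]
    exact hH k i h1 (by omega) h3 (by omega) (by omega)
  have ulink : ∀ k i, 1 ≤ k → k ≤ n → b + 1 < i → i ≤ n → cV a b i = k → g k n = g (k+1) n := by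
    intro k i h1 h2 h3 h4 h5
    rw [upp k n i (by omega) (by omega) (by omega) (by omega) (by omega) (by omega),
      upp (k+1) n i (by omega) (by omega) (by omega) (by omega) (by omega) (by omega)]
    exact hH k i (by omega) (by omega) (by omega) (by omega) (by omega)
  have D1 : ∀ x, 2 ≤ x → x ≤ b → x < a → g x 1 = g 1 1 := by
    intro x h1 h2 h3
    refine rowc (fun x => g x 1) 1 x ?_ x (by omega) le_rfl
    intro k hk1 hk2
    exact dlink k k hk1 (by omega) (by omega) (by omega) (by unfold cV; split_ifs <;> omega)
  have D2 : ∀ x, a < x → x ≤ b + 1 → g x 1 = g 1 1 := by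
    intro x h1 h2
    rw [← cola 1 (by omega) (by omega)]
    refine rowc (fun x => g x 1) a x ?_ x (by omega) le_rfl
    intro k hk1 hk2
    exact dlink k (k-1) (by omega) (by omega) (by omega) (by omega) (by unfold cV; split_ifs <;> omega)
  have U1 : ∀ x, b < x → x < a → g x n = g 1 1 := by
    intro x h1 h2
    rw [← cola n (by omega) (by omega)]
    refine rowd (fun x => g x n) x a ?_ x a le_rfl (by omega) (by omega) le_rfl
    intro k hk1 hk2
    exact ulink k (k+1) (by omega) (by omega) (by omega) (by omega) (by unfold cV; split_ifs <;> omega)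
  have U2 : ∀ x, a < x → b + 1 < x → x ≤ n → g x n = g 1 1 := by
    intro x h1 h2 h3
    rw [← hR' n (by omega) (by omega)]
    refine rowd (fun x => g x n) x (n+1) ?_ x (n+1) le_rfl (by omega) (by omega) le_rfl
    intro k hk1 hk2
    exact ulink k k (by omega) (by omega) (by omega) (by omega) (by unfold cV; split_ifs <;> omega)
  intro x y h1 h2 h3 h4
  rcases eq_or_ne x 1 with h | h
  · rw [h, hL] <;> omega
  rcases eq_or_ne x (n+1) with h' | h'
  · rw [h', hR'] <;> omega
  rcases lt_trichotomy x a with hxa | hxa | hxa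
  · by_cases hxb : x ≤ b
    · by_cases hy : y ≤ b
      · rw [← D1 x (by omega) hxb hxa]
        refine rowd (fun y => g x y) 1 b ?_ y 1 h3 hy le_rfl hb
        intro z hz hz'
        exact hV x z (by omega) (by omega) (by omega) (by omega) (by omega)
      · rw [← hi x h1 (by omega)]
        refine rowc (fun y => g x y) (b+1) n ?_ y (by omega) h4
        intro z hz hz'
        exact hV x z (by omega) (by omega) (by omega) (by omega) (by omega)
    · by_cases hy : y ≤ b + 1
      · rw [← hi x h1 (by omega)]
        refine rowd (fun y => g x y) 1 (b+1) ?_ y (b+1) h3 hy (by omega) (by omega)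
        intro z hz hz'
        exact hV x z (by omega) (by omega) (by omega) (by omega) (by omega)
      · rw [upp x y n (by omega) (by omega) (by omega) (by omega) (by omega) (by omega)]
        exact U1 x (by omega) hxa
  · rw [hxa]; exact cola y h3 h4
  · by_cases hxb : x ≤ b + 1
    · by_cases hy : y < b
      · rw [low x y 1 (by omega) (by omega) (by omega) (by omega) (by omega) (by omega)]
        exact D2 x hxa hxb
      · rw [← lo' x (by omega) (by omega)]
        refine rowc (fun y => g x y) b n ?_ y (by omega) h4
        intro z hz hz'
        exact hV x z (by omega) (by omega) (by omega) (by omega) (by omega)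
    · by_cases hy : y ≤ b
      · rw [← lo' x (by omega) (by omega)]
        refine rowd (fun y => g x y) 1 b ?_ y b (by omega) hy hb le_rfl
        intro z hz hz'
        exact hV x z (by omega) (by omega) (by omega) (by omega) (by omega)
      · rw [← U2 x hxa (by omega) (by omega)]
        refine rowd (fun y => g x y) (b+1) n ?_ y n (by omega) h4 (by omega) le_rfl
        intro z hz hz'
        exact hV x z (by omega) (by omega) (by omega) (by omega) (by omega)

/-- Connectivity in the board with left side and right side contracted. -/
def Conn (n : ℕ) (S : Set Edge) : Prop :=
  ∀ f : Vtx → Bool,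
    (∀ e ∈ S, e ∈ sEdges (n+1) n → f (ends e).1 = f (ends e).2) →
    (∀ u v, u ∈ lamVtx (n+1) n → v ∈ lamVtx (n+1) n → u.1 = 1 → v.1 = 1 → f u = f v) →
    (∀ u v, u ∈ lamVtx (n+1) n → v ∈ lamVtx (n+1) n → u.1 = (n:ℤ)+1 → v.1 = (n:ℤ)+1 → f u = f v) →
    ∀ u v, u ∈ lamVtx (n+1) n → v ∈ lamVtx (n+1) n → f u = f v

lemma mem_h (n : ℕ) (x y : ℤ) :
    (((x, y), true) : Edge) ∈ sEdges (n+1) n ↔ 1 ≤ x ∧ x ≤ n ∧ 1 ≤ y ∧ y ≤ n := by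
  simp [sEdges, lamEdges, lamVtx, ends]; omega

lemma mem_v (n : ℕ) (x y : ℤ) :
    (((x, y), false) : Edge) ∈ sEdges (n+1) n ↔ 2 ≤ x ∧ x ≤ n ∧ 1 ≤ y ∧ y < n := by
  simp [sEdges, lamEdges, lamVtx, ends]; omega

lemma mem_lam (n : ℕ) (x y : ℤ) :
    ((x, y) : Vtx) ∈ lamVtx (n+1) n ↔ 1 ≤ x ∧ x ≤ n + 1 ∧ 1 ≤ y ∧ y ≤ n := by
  simp [lamVtx]

lemma conn_of_CC (n : ℕ) (S : Set Edge) (H V : ℤ → ℤ → Prop) (h : CC n H V)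
    (hH : ∀ x y, (((x, y), true) : Edge) ∈ sEdges (n+1) n → H x y → ((x, y), true) ∈ S)
    (hV : ∀ x y, (((x, y), false) : Edge) ∈ sEdges (n+1) n → V x y → ((x, y), false) ∈ S) :
    Conn n S := by
  intro f hf hL hR
  have key := h (fun x y => f (x, y)) ?_ ?_ ?_ ?_
  · rintro ⟨x, y⟩ ⟨x', y'⟩ hu hv
    rw [mem_lam] at hu hv
    rw [key x y (by omega) (by omega) (by omega) (by omega),
      key x' y' (by omega) (by omega) (by omega) (by omega)]
  · intro x y h1 h2 h3 h4 h5
    have hm := (mem_h n x y).2 ⟨h1, h2, h3, h4⟩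
    simpa [ends] using hf _ (hH x y hm h5) hm
  · intro x y h1 h2 h3 h4 h5
    have hm := (mem_v n x y).2 ⟨h1, h2, h3, h4⟩
    simpa [ends] using hf _ (hV x y hm h5) hm
  · intro y h1 h2
    exact hL _ _ ((mem_lam _ _ _).2 (by omega)) ((mem_lam _ _ _).2 (by omega)) rfl rfl
  · intro y h1 h2
    exact hR _ _ ((mem_lam _ _ _).2 (by omega)) ((mem_lam _ _ _).2 (by omega)) rfl rfl

def Good (n : ℕ) (M U : Set Edge) : Prop :=
  ∃ A B : Set Edge, A ⊆ U ∧ B ⊆ U ∧ Disjoint A B ∧ Conn n (A ∪ M) ∧ Conn n (B ∪ M)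

lemma good_of_pred (n : ℕ) (e : Edge) (P : Edge → Prop)
    (hA : Conn n {x | P x ∨ x = e}) (hB : Conn n {x | ¬ P x ∨ x = e}) :
    Good n {e} (sEdges (n+1) n \ {e}) := by
  refine ⟨{x | x ∈ sEdges (n+1) n ∧ x ≠ e ∧ P x}, {x | x ∈ sEdges (n+1) n ∧ x ≠ e ∧ ¬ P x},
    fun x hx => ⟨hx.1, hx.2.1⟩, fun x hx => ⟨hx.1, hx.2.1⟩, ?_, ?_, ?_⟩
  · rw [Set.disjoint_left]; rintro x ⟨_, _, h⟩ ⟨_, _, h'⟩; exact h' h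
  · intro f hf
    refine hA f fun x hx hxb => hf x ?_ hxb
    by_cases hxe : x = e
    · right; exact hxe
    · left; exact ⟨hxb, hxe, hx.resolve_right hxe⟩
  · intro f hf
    refine hB f fun x hx hxb => hf x ?_ hxb
    by_cases hxe : x = e
    · right; exact hxe
    · left; exact ⟨hxb, hxe, hx.resolve_right hxe⟩

lemma good_init (n : ℕ) (e : Edge) (he : e ∈ sEdges (n+1) n) :
    Good n {e} (sEdges (n+1) n \ {e}) := by
  obtain ⟨⟨a, b⟩, _ | _⟩ := e
  · rw [mem_v] at he
    obtain ⟨h1, h2, h3, h4⟩ := he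
    refine good_of_pred n _ (PV a b) ?_ ?_
    · refine conn_of_CC n _ _ _ (VA n a b h1 h2 h3 h4) ?_ ?_
      · intro x y _ h; left; simpa [PV] using h
      · intro x y _ h
        rcases h with h | ⟨h, h'⟩
        · left; simpa [PV] using h
        · right; rw [h, h']
    · refine conn_of_CC n _ _ _ (VB n a b h1 h2 h3 h4) ?_ ?_
      · intro x y _ h; left; simpa only [PV, if_true] using h
      · intro x y _ h; left; simpa only [PV, Bool.false_eq_true, if_false] using h
  · rw [mem_h] at he
    obtain ⟨h1, h2, h3, h4⟩ := he
    refine good_of_pred n _ (PH a b) ?_ ?_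
    · refine conn_of_CC n _ _ _ (HA n a b h1 h2 h3 h4) ?_ ?_
      · intro x y _ h
        rcases h with h | ⟨h, h'⟩
        · left; simpa [PH] using h
        · right; rw [h, h']
      · intro x y _ h; left; simpa [PH] using h
    · refine conn_of_CC n _ _ _ (HB n a b h1 h2 h3 h4) ?_ ?_
      · intro x y _ h; left; simpa only [PH, if_true] using h
      · intro x y _ h; left; simpa only [PH, Bool.false_eq_true, if_false] using h

lemma conn_mono {n : ℕ} {S T : Set Edge} (h : S ⊆ T) (hS : Conn n S) : Conn n T :=
  fun f hf => hS f fun e he => hf e (h he)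

/-- exchange: `x ∈ A` is deleted by Breaker -/
lemma exchange (n : ℕ) (M A B : Set Edge) (x : Edge) (hA : Conn n (A ∪ M)) (hB : Conn n (B ∪ M)) :
    Conn n ((A \ {x}) ∪ M) ∨ ∃ y ∈ B, Conn n ((A \ {x}) ∪ (M ∪ {y})) := by
  by_contra hcon
  push Not at hcon
  obtain ⟨h1, h2⟩ := hcon
  have h1' := h1
  unfold Conn at h1'
  push Not at h1'
  obtain ⟨f, hf, hL, hR, u, v, hu, hv, huv⟩ := h1'
  have : ∃ y ∈ B ∪ M, y ∈ sEdges (n+1) n ∧ f (ends y).1 ≠ f (ends y).2 := by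
    by_contra hc
    push Not at hc
    exact huv (hB f hc hL hR u v hu hv)
  obtain ⟨y, hy, hyb, hyf⟩ := this
  have hyB : y ∈ B := by
    rcases hy with hy | hy
    · exact hy
    · exact absurd (hf y (Or.inr hy) hyb) hyf
  apply h2 y hyB
  intro g hg gL gR
  by_cases hx : g (ends x).1 = g (ends x).2
  · refine hA g ?_ gL gR
    intro z hz hzb
    by_cases hzx : z = x
    · rw [hzx]; exact hx
    · apply hg z _ hzb
      rcases hz with hz | hz
      · exact Or.inl ⟨hz, hzx⟩
      · exact Or.inr (Or.inl hz)
  · exfalso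
    by_cases hxf : f (ends x).1 = f (ends x).2
    · refine huv (hA f ?_ hL hR u v hu hv)
      intro z hz hzb
      by_cases hzx : z = x
      · rw [hzx]; exact hxf
      · apply hf z _ hzb
        rcases hz with hz | hz
        · exact Or.inl ⟨hz, hzx⟩
        · exact Or.inr hz
    · have hk := hA (fun w => xor (f w) (g w)) ?_ ?_ ?_ (ends y).1 (ends y).2 hyb.1.1 hyb.1.2
      · have := hg y (Or.inr (Or.inr rfl)) hyb
        simp only [this] at hk
        apply hyf
        revert hk
        cases f (ends y).1 <;> cases f (ends y).2 <;> cases g (ends y).2 <;> simp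
      · intro z hz hzb
        by_cases hzx : z = x
        · rw [hzx]
          revert hx hxf
          cases f (ends x).1 <;> cases f (ends x).2 <;> cases g (ends x).1 <;>
            cases g (ends x).2 <;> simp
        · have q1 : f (ends z).1 = f (ends z).2 := by
            apply hf z _ hzb
            rcases hz with hz | hz
            · exact Or.inl ⟨hz, hzx⟩
            · exact Or.inr hz
          have q2 : g (ends z).1 = g (ends z).2 := by
            apply hg z _ hzb
            rcases hz with hz | hz
            · exact Or.inl ⟨hz, hzx⟩
            · exact Or.inr (Or.inl hz)
          simp only [q1, q2]
      · intro p q hp hq h3 h4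
        simp only [hL p q hp hq h3 h4, gL p q hp hq h3 h4]
      · intro p q hp hq h3 h4
        simp only [hR p q hp hq h3 h4, gR p q hp hq h3 h4]

lemma good_symm_step (n : ℕ) (M U A B : Set Edge) (x : Edge) (hAU : A ⊆ U) (hBU : B ⊆ U)
    (hd : Disjoint A B) (hA : Conn n (A ∪ M)) (hB : Conn n (B ∪ M)) (hxB : x ∉ B)
    (hne : (U \ {x}).Nonempty) :
    ∃ y ∈ U \ {x}, Good n (M ∪ {y}) ((U \ {x}) \ {y}) := by
  have main : ∃ y ∈ U \ {x}, Conn n ((A \ {x}) ∪ (M ∪ {y})) := by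
    rcases exchange n M A B x hA hB with h | ⟨y, hy, h⟩
    · obtain ⟨y, hy⟩ := hne
      refine ⟨y, hy, conn_mono ?_ h⟩
      intro z; simp only [Set.mem_union]; tauto
    · exact ⟨y, ⟨hBU hy, fun h => hxB (by rw [← h]; exact hy)⟩, h⟩
  obtain ⟨y, hy, h⟩ := main
  refine ⟨y, hy, (A \ {x}) \ {y}, B \ {y}, ?_, ?_, ?_, ?_, ?_⟩
  · intro z hz; exact ⟨⟨hAU hz.1.1, hz.1.2⟩, hz.2⟩
  · intro z hz; exact ⟨⟨hBU hz.1, fun h => hxB (by rw [← h]; exact hz.1)⟩, hz.2⟩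
  · exact hd.mono (fun z hz => hz.1.1) (fun z hz => hz.1)
  · refine conn_mono ?_ h
    intro z hz
    by_cases hzy : z = y
    · right; right; exact hzy
    · rcases hz with hz | hz
      · left; exact ⟨hz, hzy⟩
      · right; exact hz
  · refine conn_mono ?_ hB
    intro z hz
    by_cases hzy : z = y
    · right; right; exact hzy
    · rcases hz with hz | hz
      · left; exact ⟨hz, hzy⟩
      · right; left; exact hz

lemma good_step (n : ℕ) (M U : Set Edge) (x : Edge) (h : Good n M U)
    (hne : (U \ {x}).Nonempty) :
    ∃ y ∈ U \ {x}, Good n (M ∪ {y}) ((U \ {x}) \ {y}) := by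
  obtain ⟨A, B, hAU, hBU, hd, hA, hB⟩ := h
  by_cases hx : x ∈ B
  · exact good_symm_step n M U B A x hBU hAU hd.symm hB hA
      (fun h => Set.disjoint_left.1 hd h hx) hne
  · exact good_symm_step n M U A B x hAU hBU hd hA hB hx hne

lemma good_end (n : ℕ) (M U : Set Edge) (x : Edge) (h : Good n M U)
    (hne : U \ {x} = ∅) : Conn n M := by
  obtain ⟨A, B, hAU, hBU, hd, hA, hB⟩ := h
  have hU : ∀ z ∈ U, z = x := by
    intro z hz
    by_contra hc
    have : z ∈ U \ {x} := ⟨hz, hc⟩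
    rw [hne] at this; exact this
  by_cases hx : x ∈ B
  · refine conn_mono ?_ hA
    rintro z (hz | hz)
    · have := hU z (hAU hz); subst this
      exact absurd hx (Set.disjoint_left.1 hd hz)
    · exact hz
  · refine conn_mono ?_ hB
    rintro z (hz | hz)
    · have := hU z (hBU hz); subst this
      exact absurd hz hx
    · exact hz

lemma good_of_conn (n : ℕ) (M : Set Edge) (h : Conn n M) (U : Set Edge) : Good n M U :=
  ⟨∅, ∅, by simp, by simp, by simp, by simpa using h, by simpa using h⟩

lemma crossing_of_conn (n : ℕ) (hn : 1 ≤ n) (M : Set Edge) (h : Conn n M) :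
    HasCrossing (n+1) n M := by
  classical
  let R : Vtx → Prop := fun v => ∃ l : List Vtx, l.head? = some v ∧
    (∃ w, l.getLast? = some w ∧ w.1 = ((n+1 : ℕ) : ℤ)) ∧
    (∀ w ∈ l, w ∈ lamVtx (n+1) n) ∧ ∀ p ∈ cp l, ∃ e ∈ M, joins e p.1 p.2
  have ext : ∀ u v, u ∈ lamVtx (n+1) n → (∃ e ∈ M, joins e u v) → R v → R u := by
    rintro u v hu he ⟨l, h1, ⟨w, h2, h2'⟩, h3, h4⟩
    cases l with
    | nil => simp at h1
    | cons v' l =>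
      simp at h1
      subst h1
      refine ⟨u :: v' :: l, rfl, ⟨w, by simpa using h2, h2'⟩, ?_, ?_⟩
      · intro z hz
        rcases List.mem_cons.1 hz with rfl | hz
        · exact hu
        · exact h3 z hz
      · intro p hp
        have : p = (u, v') ∨ p ∈ cp (v' :: l) := by simpa [cp] using hp
        rcases this with rfl | hp
        · exact he
        · exact h4 p hp
  by_cases hex : ∃ v, v.1 = 1 ∧ R v
  · obtain ⟨v, hv, l, h1, h2, h3, h4⟩ := hex
    exact ⟨l, ⟨v, h1, hv⟩, h2, h3, h4⟩
  · exfalso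
    have hl : ∀ v : Vtx, v.1 = 1 → ¬ R v := fun v hv hR => hex ⟨v, hv, hR⟩
    have hr : ∀ v : Vtx, v ∈ lamVtx (n+1) n → v.1 = (n:ℤ)+1 → R v := by
      intro v hv hv'
      exact ⟨[v], rfl, ⟨v, rfl, by simpa using hv'⟩, by simpa using hv, by simp [cp]⟩
    have := h (fun v => decide (R v)) ?_ ?_ ?_ (1, 1) ((n:ℤ)+1, 1)
      ((mem_lam _ _ _).2 (by omega)) ((mem_lam _ _ _).2 (by omega))
    · have h1 := hl (1, 1) rfl
      have h2 := hr ((n:ℤ)+1, 1) ((mem_lam _ _ _).2 (by omega)) rfl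
      simp [h1, h2] at this
    · intro e he heb
      have : R (ends e).1 ↔ R (ends e).2 :=
        ⟨ext _ _ heb.1.2 ⟨e, he, Or.inr ⟨rfl, rfl⟩⟩, ext _ _ heb.1.1 ⟨e, he, Or.inl ⟨rfl, rfl⟩⟩⟩
      simp [this]
    · intro u v _ _ h1 h2; simp [hl u h1, hl v h2]
    · intro u v hu hv h1 h2; simp [hr u hu h1, hr v hv h2]

lemma allClaimed_append (h k : List (Finset Edge)) :
    allClaimed (h ++ k) = allClaimed h ∪ allClaimed k := by
  induction h with
  | nil => simp [allClaimed]
  | cons m h ih =>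
    have h1 : ∀ l : List (Finset Edge), allClaimed (m :: l) = m ∪ allClaimed l := fun _ => rfl
    rw [List.cons_append, h1, h1, ih, Finset.union_assoc]

lemma altUnion_append (h k : List (Finset Edge)) : ∀ b : Bool,
    altUnion b (h ++ k) = altUnion b h ∪ altUnion (if Even h.length then b else !b) k := by
  induction h with
  | nil => intro b; cases b <;> simp [altUnion]
  | cons m h ih =>
    intro b
    cases b
    · simp only [List.cons_append, altUnion, ih, List.length_cons, Nat.even_add_one]
      by_cases hh : Even h.length <;> simp [hh]
    · simp only [List.cons_append, altUnion, ih, List.length_cons, Nat.even_add_one,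
        Finset.union_assoc]
      by_cases hh : Even h.length <;> simp [hh]

lemma hist_even (σ τ : Strategy) (t : ℕ) : Even (hist σ τ t).length := by
  induction t with
  | zero => simp [hist]
  | succ t ih => simp only [hist, List.length_append, List.length_cons, List.length_nil]; grind

lemma first_succ (σ τ : Strategy) (t : ℕ) :
    firstClaimed (hist σ τ (t+1)) = firstClaimed (hist σ τ t) ∪ σ (hist σ τ t) := by
  unfold firstClaimed
  simp only [hist]
  rw [altUnion_append]
  simp [hist_even, altUnion]

lemma all_succ (σ τ : Strategy) (t : ℕ) :
    allClaimed (hist σ τ (t+1)) = allClaimed (hist σ τ t) ∪ σ (hist σ τ t) ∪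
      τ (hist σ τ t ++ [σ (hist σ τ t)]) := by
  simp only [hist]
  rw [allClaimed_append]
  simp [allClaimed, Finset.union_assoc]

lemma all_snoc (h : List (Finset Edge)) (m : Finset Edge) :
    allClaimed (h ++ [m]) = allClaimed h ∪ m := by
  rw [allClaimed_append]; simp [allClaimed]

/-- Unclaimed edges of the board. -/
def Free (n : ℕ) (h : List (Finset Edge)) : Set Edge := sEdges (n+1) n \ ↑(allClaimed h)

def Cand (n : ℕ) (h : List (Finset Edge)) (y : Edge) : Prop :=
  y ∈ Free n h ∧ Good n (↑(firstClaimed h) ∪ {y}) (Free n h \ {y})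

open Classical in
noncomputable def strat (n : ℕ) (e : Edge) : Strategy := fun h =>
  if h = [] then {e} else if H : ∃ y, Cand n h y then {H.choose} else ∅

lemma board_finite (n : ℕ) : (sEdges (n+1) n).Finite := by
  apply Set.Finite.subset
    (((Set.finite_Icc (1:ℤ) (n+1)).prod (Set.finite_Icc (1:ℤ) n)).prod (Set.finite_univ (α := Bool)))
  rintro ⟨⟨x, y⟩, b⟩ h
  have := h.1.1
  simp only [ends, mem_lam] at this
  simp; omega

/-- What holds before each of Maker's moves. -/
def Inv (n : ℕ) (h : List (Finset Edge)) : Prop :=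
  (∃ y, Cand n h y) ∨ (Free n h = ∅ ∧ Conn n ↑(firstClaimed h))

lemma strat_spec (n : ℕ) (e : Edge) (he : e ∈ sEdges (n+1) n) (h : List (Finset Edge))
    (hi : Inv n h) :
    LegalMove (sEdges (n+1) n) h 1 (strat n e h) ∧
      Good n ↑(firstClaimed h ∪ strat n e h) (Free n h \ ↑(strat n e h)) := by
  by_cases h0 : h = []
  · subst h0
    have : strat n e [] = {e} := by simp [strat]
    rw [this]
    constructor
    · refine ⟨?_, Or.inl (by simp)⟩
      simpa [allClaimed] using he
    · have := good_init n e he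
      simpa [Free, allClaimed, firstClaimed, altUnion] using this
  by_cases H : ∃ y, Cand n h y
  · have hs : strat n e h = {H.choose} := by simp only [strat, h0, if_false, H, dif_pos]
    have hc := H.choose_spec
    rw [hs]
    constructor
    · refine ⟨?_, Or.inl (by simp)⟩
      simpa [Free] using hc.1
    · simpa using hc.2
  · have hs : strat n e h = ∅ := by simp only [strat, h0, if_false, H, dif_neg, not_false_eq_true]
    rw [hs]
    obtain ⟨h1, h2⟩ := hi.resolve_left H
    constructor
    · refine ⟨by simp, Or.inr ⟨by simp, ?_⟩⟩
      have : sEdges (n+1) n \ ↑(allClaimed h) = ∅ := h1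
      rw [this]; simp
    · exact good_of_conn n _ (by simpa using h2) _

lemma inv_step (n : ℕ) (e : Edge) (he : e ∈ sEdges (n+1) n) (τ : Strategy)
    (hτ : SecondLegal (sEdges (n+1) n) 1 (strat n e) τ) (t : ℕ)
    (hi : Inv n (hist (strat n e) τ t)) : Inv n (hist (strat n e) τ (t+1)) := by
  obtain ⟨-, hg⟩ := strat_spec n e he _ hi
  have ht := hτ t
  set h := hist (strat n e) τ t with hh
  set m := strat n e h with hm
  set w := τ (h ++ [m]) with hw
  have hF : Free n (hist (strat n e) τ (t+1)) = (Free n h \ ↑m) \ ↑w := by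
    unfold Free
    rw [all_succ]
    simp only [← hh, ← hm, ← hw]
    ext z; simp; tauto
  have hM : firstClaimed (hist (strat n e) τ (t+1)) = firstClaimed h ∪ m := first_succ _ _ _
  have hfree : sEdges (n+1) n \ ↑(allClaimed (h ++ [m])) = Free n h \ ↑m := by
    unfold Free
    rw [all_snoc]
    ext z; simp; tauto
  unfold LegalMove at ht
  rw [hfree] at ht
  unfold Inv Cand
  rw [hF, hM]
  obtain ⟨hsub, hcard | ⟨hcard, hall⟩⟩ := ht
  · obtain ⟨x, hx⟩ := Finset.card_eq_one.1 hcard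
    rw [hx, Finset.coe_singleton]
    rcases Set.eq_empty_or_nonempty ((Free n h \ ↑m) \ {x}) with hE | hE
    · exact Or.inr ⟨hE, good_end n _ _ x hg hE⟩
    · left
      obtain ⟨y, hy, hy'⟩ := good_step n _ _ x hg hE
      exact ⟨y, hy, hy'⟩
  · have hw0 : w = ∅ := by
      apply Finset.card_eq_zero.1; omega
    rw [hw0] at hall ⊢
    have hE : Free n h \ ↑m = ∅ := by
      apply Set.eq_empty_of_subset_empty; simpa using hall
    right
    refine ⟨by rw [hE]; simp, ?_⟩
    refine good_end n _ _ e hg ?_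
    rw [hE]; simp

lemma inv_all (n : ℕ) (e : Edge) (he : e ∈ sEdges (n+1) n) (τ : Strategy)
    (hτ : SecondLegal (sEdges (n+1) n) 1 (strat n e) τ) (t : ℕ) :
    Inv n (hist (strat n e) τ t) := by
  induction t with
  | zero =>
    left
    refine ⟨e, ?_, ?_⟩
    · simpa [Free, hist, allClaimed] using he
    · simpa [Free, hist, allClaimed, firstClaimed, altUnion] using good_init n e he
  | succ t ih => exact inv_step n e he τ hτ t ih

lemma free_card (n : ℕ) (e : Edge) (he : e ∈ sEdges (n+1) n) (τ : Strategy)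
    (hτ : SecondLegal (sEdges (n+1) n) 1 (strat n e) τ) (t : ℕ) :
    (Free n (hist (strat n e) τ t)).ncard ≤ (sEdges (n+1) n).ncard - t := by
  induction t with
  | zero => exact Set.ncard_le_ncard Set.diff_subset (board_finite n)
  | succ t ih =>
    obtain ⟨⟨hsub, hl⟩, -⟩ := strat_spec n e he _ (inv_all n e he τ hτ t)
    set h := hist (strat n e) τ t with hh
    have hfin : (Free n h).Finite := (board_finite n).subset Set.diff_subset
    have hF : Free n (hist (strat n e) τ (t+1)) ⊆ Free n h \ ↑(strat n e h) := by
      unfold Free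
      rw [all_succ]
      simp only [← hh]
      intro z; simp; tauto
    have h1 := Set.ncard_le_ncard hF (hfin.subset Set.diff_subset)
    rcases hl with hc | ⟨hc, hall⟩
    · obtain ⟨x, hx⟩ := Finset.card_eq_one.1 hc
      rw [hx] at h1 hsub
      have hx' : x ∈ Free n h := hsub (by simp)
      rw [Finset.coe_singleton] at h1
      have := Set.ncard_diff_singleton_lt_of_mem hx' hfin
      omega
    · have : Free n h \ ↑(strat n e h) = ∅ := Set.diff_eq_empty.2 hall
      rw [this, Set.ncard_empty] at h1
      omega

/-- **Theorem (Bridg-it with a free first move).** For every `n ≥ 1` and every edge `e`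
of `S_{(n+1)×n}`, Maker has a winning strategy for the `(1,1)`-crossing game (Bridg-it)
on `S_{(n+1)×n}` whose first move is the edge `e`. -/
theorem maker_wins_bridgit_with_any_first_move
    (n : ℕ) (hn : 1 ≤ n) (e : Edge) (he : e ∈ sEdges (n + 1) n) :
    ∃ σ : Strategy, σ [] = {e} ∧
      ∀ τ : Strategy, SecondLegal (sEdges (n + 1) n) 1 σ τ →
        FirstLegal (sEdges (n + 1) n) 1 σ τ ∧
        ∃ t, HasCrossing (n + 1) n ↑(firstClaimed (hist σ τ t)) := by
  refine ⟨strat n e, by simp [strat], fun τ hτ => ⟨fun t => ?_, (sEdges (n+1) n).ncard, ?_⟩⟩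
  · exact (strat_spec n e he _ (inv_all n e he τ hτ t)).1
  · apply crossing_of_conn n hn
    have hfin : (Free n (hist (strat n e) τ (sEdges (n+1) n).ncard)).Finite :=
      (board_finite n).subset Set.diff_subset
    have h0 : Free n (hist (strat n e) τ (sEdges (n+1) n).ncard) = ∅ := by
      have := free_card n e he τ hτ (sEdges (n+1) n).ncard
      rw [← Set.ncard_eq_zero hfin]; omega
    rcases inv_all n e he τ hτ (sEdges (n+1) n).ncard with ⟨y, hy, -⟩ | ⟨-, h⟩
    · rw [h0] at hy; exact absurd hy (Set.notMem_empty y)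
    · exact h

end CrossingGames
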